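/- Let A be a nonzero Noetherian commutative ring, let R = A[x,y,u,v] be the polynomial ring, and set x₁ = xu, x₂ = yv, x₃ = xv + yu, I = (x₁,x₂,x₃)R. Then H³_I(R) ≅ H⁴_{(x,y,u,v)}(R) ≠ 0, yet 𝔥³_x(R) = 0 and 𝔥̲³_x(R) = 0. In particular, x₁, x₂, x₃ is not a Q-sequence in R. -/

import Mathlib

open scoped BigOperators ENNReal
open MvPolynomial

universe u

/-- A filtration of `M` of length `h` whose factors are cyclic modules killed by `J`. -/
def HasQLFiltration (S : Type u) [CommRing S] (J : Ideal S)
    (M : Type u) [AddCommGroup M] [Module S M] (h : ℕ) : Prop :=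
  ∃ c : Fin (h + 1) → Submodule S M,
    Monotone c ∧ c 0 = ⊥ ∧ c (Fin.last h) = ⊤ ∧
    ∀ i : Fin h,
      (∃ m : M, c i.succ = c i.castSucc ⊔ Submodule.span S {m}) ∧
      ∀ a ∈ J, ∀ x ∈ c i.succ, a • x ∈ c i.castSucc

/-- The `J`-quasilength of `M`. -/
noncomputable def quasilength (S : Type u) [CommRing S] (J : Ideal S)
    (M : Type u) [AddCommGroup M] [Module S M] : ℕ∞ :=
  sInf {n : ℕ∞ | ∃ h : ℕ, n = (h : ℕ∞) ∧ HasQLFiltration S J M h}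

/-- The ideal `(x₁^{t₁}, …, x_d^{t_d})`. -/
def powerIdeal {R : Type u} [CommRing R] {d : ℕ} (x : Fin d → R) (t : Fin d → ℕ) : Ideal R :=
  Ideal.span (Set.range fun i => x i ^ t i)

/-- The content `𝔥^d_x(M)` of `M` with respect to `x₁, …, x_d`. -/
noncomputable def content {R : Type u} [CommRing R] {d : ℕ} (x : Fin d → R)
    (M : Type u) [AddCommGroup M] [Module R M] : ℝ≥0∞ :=
  ⨆ s : ℕ, ⨅ t : {t : Fin d → ℕ // ∀ i, s ≤ t i ∧ 0 < t i},
    (quasilength R (Ideal.span (Set.range x))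
        (M ⧸ (powerIdeal x (t : Fin d → ℕ) • (⊤ : Submodule R M))) : ℝ≥0∞) /
      ∏ i, ((t : Fin d → ℕ) i : ℝ≥0∞)

/-- The submodule `(I_t M)^lim = ⋃_k ((x₁^{t₁+k},…,x_d^{t_d+k})M :_M (x₁⋯x_d)^k)`. -/
noncomputable def limSubmodule {R : Type u} [CommRing R] {d : ℕ} (x : Fin d → R)
    (M : Type u) [AddCommGroup M] [Module R M] (t : Fin d → ℕ) : Submodule R M :=
  ⨆ k : ℕ, Submodule.comap (LinearMap.lsmul R M ((∏ i, x i) ^ k))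
    ((Ideal.span (Set.range fun i => x i ^ (t i + k))) • (⊤ : Submodule R M))

/-- The underlined content `𝔥̲^d_x(M)` of `M` with respect to `x₁, …, x_d`. -/
noncomputable def ucontent {R : Type u} [CommRing R] {d : ℕ} (x : Fin d → R)
    (M : Type u) [AddCommGroup M] [Module R M] : ℝ≥0∞ :=
  ⨆ s : ℕ, ⨅ t : {t : Fin d → ℕ // ∀ i, s ≤ t i ∧ 0 < t i},
    (quasilength R (Ideal.span (Set.range x))
        (M ⧸ limSubmodule x M (t : Fin d → ℕ)) : ℝ≥0∞) /
      ∏ i, ((t : Fin d → ℕ) i : ℝ≥0∞)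

/-- `x₁, …, x_d` is a Q-sequence in `S`. -/
def IsQSequence {d : ℕ} {S : Type u} [CommRing S] (x : Fin d → S) : Prop :=
  Ideal.span (Set.range x) ≠ ⊤ ∧
  ∀ t : ℕ, 0 < t →
    ((t : ℕ∞) ^ d) ≤ quasilength S (Ideal.span (Set.range x))
      (S ⧸ Ideal.span (Set.range fun i => x i ^ t))

/-! In `R / (x₁ᵗ, x₂ᵗ, x₃ᵗ)` the relations `x₁ᵗ = xᵗuᵗ` and `x₂ᵗ = yᵗvᵗ` are products, and a
quotient by an ideal containing `fg` is filtered by quotients in which `f`, respectively `g`, is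
killed. Killing `yᵗ` and `uᵗ` (or `xᵗ` and `vᵗ`) turns `x₃ᵗ = 0` into one more product relation,
such as `x²ᵗv²ᵗ = 0`. Splitting that as well leaves quotients by powers of two of the variables,
and these have quasilength `O(t²)` because `I` lies in both `(x, y)` and `(u, v)`. So the
quasilength is `O(t²)`, which is negligible against `t³`.

Since `(xv)² = xv · x₃ - x₁x₂`, the ideal `I` has the same radical as `(x, y) ∩ (u, v)`. The
functors `Ext(R/(xᵏ, yᵏ), -)` and `Ext(R/(uᵏ, vᵏ), -)` vanish above degree `2`, so the
Mayer–Vietoris connecting maps give `H³_I(R) ≅ H⁴_{(x,y,u,v)}(R)`. The latter is the colimit of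
the modules `Ext⁴(R/(xᵏ,yᵏ,uᵏ,vᵏ), R) ≅ R/(xᵏ,yᵏ,uᵏ,vᵏ)` along multiplication by `xyuv`, and it is
nonzero because `(xyuv)ˡ` does not lie in `(xˡ⁺¹, yˡ⁺¹, uˡ⁺¹, vˡ⁺¹)`. -/

section Filtration

variable {R : Type u} [CommRing R]

/-- `HasCyclicChain I n a` says that `R ⧸ a` has a filtration of length `n` whose factors are
cyclic and killed by `I`, i.e. that its `I`-quasilength is at most `n`. The filtration is encoded as
a chain of ideals climbing from `a` to `⊤`, each generated over the previous one by a single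
element. -/
inductive HasCyclicChain (I : Ideal R) : ℕ → Ideal R → Prop
  | top : HasCyclicChain I 0 ⊤
  | step {n : ℕ} {a : Ideal R} (g : R) (hg : ∀ r ∈ I, r * g ∈ a)
      (h : HasCyclicChain I n (a ⊔ Ideal.span {g})) : HasCyclicChain I (n + 1) a

namespace HasCyclicChain

variable {I a b : Ideal R} {n n' : ℕ}

theorem mono (h : HasCyclicChain I n a) (hab : a ≤ b) : HasCyclicChain I n b := by
  induction h generalizing b with
  | top => exact top_le_iff.1 hab ▸ top
  | step g hg _ ih => exact step g (fun r hr => hab (hg r hr)) (ih (sup_le_sup_right hab _))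

theorem one_of_le (h : I ≤ a) : HasCyclicChain I 1 a :=
  step 1 (fun r hr => by simpa using h hr) (by simpa using top)

-- Multiplication by `f` maps `R ⧸ b` onto the kernel of `R ⧸ a → R ⧸ (a + (f))`.
theorem of_mul_mem {f : R} (hb : HasCyclicChain I n b)
    (hf : HasCyclicChain I n' (a ⊔ Ideal.span {f})) (hfb : ∀ r ∈ b, f * r ∈ a) :
    HasCyclicChain I (n + n') a := by
  induction hb generalizing a with
  | top =>
    have hfa : Ideal.span {f} ≤ a := by simpa using hfb 1 trivial
    rwa [zero_add, ← sup_eq_left.2 hfa]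
  | @step k b g hg _ ih =>
    rw [Nat.add_right_comm]
    refine step (f * g) (fun r hr => mul_left_comm f r g ▸ hfb _ (hg r hr))
      (ih (hf.mono (sup_le_sup_right le_sup_left _)) ?_)
    rw [← Ideal.span_singleton_mul_le_iff, Ideal.mul_sup, Ideal.span_singleton_mul_span_singleton]
    exact sup_le_sup_right (Ideal.span_singleton_mul_le_iff.2 hfb) _

theorem exists_chain (h : HasCyclicChain I n a) : ∃ c : Fin (n + 1) → Ideal R,
    c 0 = a ∧ c (Fin.last n) = ⊤ ∧ ∀ i : Fin n, ∃ g, c i.succ = c i.castSucc ⊔ Ideal.span {g} ∧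
      ∀ r ∈ I, r * g ∈ c i.castSucc := by
  induction h with
  | top => exact ⟨fun _ => ⊤, rfl, rfl, Fin.elim0⟩
  | @step n a g hg _ ih =>
    obtain ⟨c, hc_zero, hc_last, hc⟩ := ih
    refine ⟨Fin.cons a c, rfl, hc_last, Fin.cases ⟨g, hc_zero, hg⟩ hc⟩

theorem hasQLFiltration {a : Submodule R R} (h : HasCyclicChain I n a) :
    HasQLFiltration R I (R ⧸ a) n := by
  obtain ⟨c, hc_zero, hc_last, hc⟩ := h.exists_chain
  refine ⟨fun i => Submodule.map a.mkQ (c i), Fin.monotone_iff_le_succ.2 fun i => ?_, ?_, ?_,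
    fun i => ?_⟩
  · obtain ⟨g, hg, -⟩ := hc i
    exact Submodule.map_mono (hg ▸ le_sup_left)
  · simp only [hc_zero, Submodule.mkQ_map_self]
  · simp only [hc_last, Submodule.map_top, Submodule.range_mkQ]
  · obtain ⟨g, hg, hIg⟩ := hc i
    refine ⟨⟨a.mkQ g, ?_⟩, ?_⟩
    · simp only [hg, Submodule.map_sup, Ideal.span, Submodule.map_span, Set.image_singleton]
    · rintro r hr _ ⟨s, hs, rfl⟩
      rw [hg, sup_comm, SetLike.mem_coe, Ideal.mem_span_singleton_sup] at hs
      obtain ⟨q, p, hp, rfl⟩ := hs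
      refine ⟨r * (q * g + p), ?_, map_smul a.mkQ r _⟩
      rw [mul_add, mul_left_comm]
      exact add_mem (Ideal.mul_mem_left _ _ (hIg r hr)) (Ideal.mul_mem_left _ _ hp)

theorem quasilength_le {a : Submodule R R} (h : HasCyclicChain I n a) :
    quasilength R I (R ⧸ a) ≤ n :=
  sInf_le ⟨n, rfl, h.hasQLFiltration⟩

theorem of_insert {f g : R} {s t : Set R} (hf : HasCyclicChain I n (Ideal.span (insert f s)))
    (hg : HasCyclicChain I n' (Ideal.span (insert g t))) (hs : s ⊆ a) (ht : t ⊆ a)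
    (hfg : f * g ∈ a) : HasCyclicChain I (n + n') a := by
  rw [Ideal.span_insert, sup_comm] at hf hg
  rw [add_comm]
  refine hg.of_mul_mem (hf.mono (sup_le_sup_right (Ideal.span_le.2 hs) _)) ?_
  rw [← Ideal.span_singleton_mul_le_iff, Ideal.mul_sup, Ideal.span_singleton_mul_span_singleton]
  exact sup_le (Ideal.mul_le_right.trans (Ideal.span_le.2 ht))
    ((Ideal.span_singleton_le_iff_mem _).2 hfg)

theorem span_insert_pow {f : R} {s : Set R} (h : HasCyclicChain I n (Ideal.span (insert f s)))
    (t : ℕ) : HasCyclicChain I (t * n) (Ideal.span (insert (f ^ t) s)) := by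
  induction t with
  | zero =>
    have htop : Ideal.span (insert (f ^ 0) s) = ⊤ := by
      rw [Ideal.eq_top_iff_one]
      exact Ideal.subset_span (by simp)
    rw [zero_mul, htop]
    exact top
  | succ t ih =>
    rw [Nat.succ_mul]
    have hs : s ⊆ (Ideal.span (insert (f ^ (t + 1)) s) : Set R) :=
      (Set.subset_insert _ _).trans Submodule.subset_span
    exact ih.of_insert h hs hs (pow_succ f t ▸ Ideal.subset_span (Set.mem_insert _ _))

theorem span_pow_pow {p q : R} (h : I ≤ Ideal.span {p, q}) (s t : ℕ) :
    HasCyclicChain I (s * t) (Ideal.span {p ^ s, q ^ t}) := by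
  rw [Set.pair_comm] at h
  have hq := (one_of_le h).span_insert_pow t
  rw [Set.pair_comm, mul_one] at hq
  exact hq.span_insert_pow s

variable {x y z w : R}

theorem span_cross_pow (hxy : I ≤ Ideal.span {x, y}) (hzw : I ≤ Ideal.span {z, w}) (t : ℕ) :
    HasCyclicChain I (4 * t ^ 2) (Ideal.span {y ^ t, z ^ t, (x * w + y * z) ^ t}) := by
  set a := Ideal.span {y ^ t, z ^ t, (x * w + y * z) ^ t}
  have hy : y ^ t ∈ a := Ideal.subset_span (by simp)
  have hz : z ^ t ∈ a := Ideal.subset_span (by simp)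
  have hsum : (x * w + y * z) ^ t ∈ a := Ideal.subset_span (by simp)
  have hyz : (-(y * z)) ^ t ∈ a := by
    rw [neg_pow, mul_pow]
    exact a.mul_mem_left _ (a.mul_mem_left _ hz)
  have hxw : x ^ (2 * t) * w ^ (2 * t) ∈ a := by
    have h := a.add_pow_mem_of_pow_mem_of_le hsum hyz (k := 2 * t) (by lia)
    rwa [add_neg_cancel_right, mul_pow] at h
  have hw := span_pow_pow hzw t (2 * t)
  rw [Set.pair_comm] at hw
  convert (span_pow_pow hxy (2 * t) t).of_insert hw (by simpa) (by simpa) hxw using 1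
  ring

theorem span_pow_mul_pow (hxy : I ≤ Ideal.span {x, y}) (hzw : I ≤ Ideal.span {z, w}) (t : ℕ) :
    HasCyclicChain I (5 * t ^ 2) (Ideal.span {x ^ t, (y * w) ^ t, (x * w + y * z) ^ t}) := by
  set a := Ideal.span {x ^ t, (y * w) ^ t, (x * w + y * z) ^ t}
  have hx : x ^ t ∈ a := Ideal.subset_span (by simp)
  have hyw : y ^ t * w ^ t ∈ a := mul_pow y w t ▸ Ideal.subset_span (by simp)
  have hsum : (y * z + x * w) ^ t ∈ a := add_comm (x * w) _ ▸ Ideal.subset_span (by simp)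
  rw [Set.pair_comm] at hxy hzw
  have hw := span_cross_pow hxy hzw t
  rw [Set.insert_comm] at hw
  convert (span_pow_pow hxy t t).of_insert hw (by simpa) (Set.pair_subset hx hsum) hyw using 1
  ring

theorem span_mul_pow_mul_pow (hxy : I ≤ Ideal.span {x, y}) (hzw : I ≤ Ideal.span {z, w}) (t : ℕ) :
    HasCyclicChain I (10 * t ^ 2)
      (Ideal.span {(x * z) ^ t, (y * w) ^ t, (x * w + y * z) ^ t}) := by
  set a := Ideal.span {(x * z) ^ t, (y * w) ^ t, (x * w + y * z) ^ t}
  have hxz : x ^ t * z ^ t ∈ a := mul_pow x z t ▸ Ideal.subset_span (by simp)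
  have hyw : (y * w) ^ t ∈ a := Ideal.subset_span (by simp)
  have hsum : (x * w + y * z) ^ t ∈ a := Ideal.subset_span (by simp)
  have hz : HasCyclicChain I (5 * t ^ 2)
      (Ideal.span {z ^ t, (y * w) ^ t, (x * w + y * z) ^ t}) := by
    rw [mul_comm y w, mul_comm x w, mul_comm y z, add_comm]
    exact span_pow_mul_pow hzw hxy t
  convert (span_pow_mul_pow hxy hzw t).of_insert hz (Set.pair_subset hyw hsum)
    (Set.pair_subset hyw hsum) hxz using 1
  ring

end HasCyclicChain

section Content

theorem iSup_iInf_div_prod_eq_zero {d e C : ℕ} (hed : e < d) (q : (Fin d → ℕ) → ℕ∞)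
    (hq : ∀ t, q (fun _ => t) ≤ (C * t ^ e : ℕ)) :
    (⨆ s : ℕ, ⨅ t : {t : Fin d → ℕ // ∀ i, s ≤ t i ∧ 0 < t i},
      (q t : ℝ≥0∞) / ∏ i, ((t : Fin d → ℕ) i : ℝ≥0∞)) = 0 := by
  refine ENNReal.iSup_eq_zero.2 fun s => le_antisymm ?_ zero_le
  have hlim : Filter.Tendsto (fun t : ℕ => C / (t : ℝ≥0∞)) Filter.atTop (nhds 0) := by
    simpa using ENNReal.Tendsto.const_div ENNReal.tendsto_nat_nhds_top
      (.inr (ENNReal.natCast_ne_top C))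
  refine ge_of_tendsto hlim ?_
  filter_upwards [Filter.eventually_ge_atTop (s + 1)] with t ht
  have ht_zero : (t : ℝ≥0∞) ≠ 0 := by simp; lia
  have ht_top : (t : ℝ≥0∞) ≠ ⊤ := ENNReal.natCast_ne_top t
  refine (iInf_le _ ⟨fun _ => t, fun _ => by lia⟩).trans ?_
  calc (q (fun _ => t) : ℝ≥0∞) / ∏ _i : Fin d, (t : ℝ≥0∞)
      ≤ (C * t ^ e : ℕ) / t ^ d := by
        simpa using ENNReal.div_le_div_right (ENat.toENNReal_le.2 (hq t)) _
    _ ≤ (C * t ^ e) / t ^ (e + 1) := by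
        push_cast
        gcongr
        · exact_mod_cast Nat.one_le_of_lt ht
        · exact hed
    _ = C / t := by
        rw [pow_succ', ENNReal.mul_div_mul_right _ _ (pow_ne_zero e ht_zero)
          (ENNReal.pow_ne_top ht_top)]

variable {d e C : ℕ} {x : Fin d → R}

theorem content_eq_zero (hed : e < d)
    (h : ∀ t, HasCyclicChain (Ideal.span (Set.range x)) (C * t ^ e) (powerIdeal x fun _ => t)) :
    content x R = 0 :=
  iSup_iInf_div_prod_eq_zero hed
    (fun t => quasilength R _ (R ⧸ powerIdeal x t • (⊤ : Submodule R R)))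
    fun t => ((h t).mono (by simp)).quasilength_le

theorem ucontent_eq_zero (hed : e < d)
    (h : ∀ t, HasCyclicChain (Ideal.span (Set.range x)) (C * t ^ e) (powerIdeal x fun _ => t)) :
    ucontent x R = 0 := by
  refine iSup_iInf_div_prod_eq_zero hed (fun t => quasilength R _ (R ⧸ limSubmodule x R t))
    fun t => ((h t).mono ?_).quasilength_le
  exact fun r hr => Submodule.mem_iSup_of_mem 0 (by simpa [powerIdeal] using hr)

theorem not_isQSequence (hed : e < d)
    (h : ∀ t, HasCyclicChain (Ideal.span (Set.range x)) (C * t ^ e) (powerIdeal x fun _ => t)) :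
    ¬ IsQSequence x := by
  rintro ⟨-, hx⟩
  have hle : (((C + 1) ^ d : ℕ) : ℕ∞) ≤ (C * (C + 1) ^ e : ℕ) := by
    exact_mod_cast (hx (C + 1) C.succ_pos).trans (h (C + 1)).quasilength_le
  refine (Nat.cast_le.1 hle).not_gt ?_
  calc C * (C + 1) ^ e < (C + 1) ^ (e + 1) := by rw [pow_succ']; gcongr; lia
    _ ≤ (C + 1) ^ d := Nat.pow_le_pow_right C.succ_pos hed

end Content

section Cross

variable (x y z w : R)

theorem span_range_cross_le :
    Ideal.span (Set.range ![x * z, y * w, x * w + y * z]) ≤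
      Ideal.span {x, y} * Ideal.span {z, w} := by
  have hmul {p q : R} (hp : p ∈ ({x, y} : Set R)) (hq : q ∈ ({z, w} : Set R)) :
      p * q ∈ Ideal.span {x, y} * Ideal.span {z, w} :=
    Ideal.mul_mem_mul (Ideal.subset_span hp) (Ideal.subset_span hq)
  rw [Ideal.span_le, Set.range_subset_iff]
  intro i
  fin_cases i
  exacts [hmul (by simp) (by simp), hmul (by simp) (by simp),
    add_mem (hmul (by simp) (by simp)) (hmul (by simp) (by simp))]

theorem hasCyclicChain_powerIdeal_cross (t : ℕ) :
    HasCyclicChain (Ideal.span (Set.range ![x * z, y * w, x * w + y * z])) (10 * t ^ 2)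
      (powerIdeal ![x * z, y * w, x * w + y * z] fun _ => t) := by
  have hle := span_range_cross_le x y z w
  refine (HasCyclicChain.span_mul_pow_mul_pow (hle.trans Ideal.mul_le_left)
    (hle.trans Ideal.mul_le_right) t).mono (Ideal.span_mono ?_)
  rintro _ (rfl | rfl | rfl)
  exacts [⟨0, rfl⟩, ⟨1, rfl⟩, ⟨2, rfl⟩]

end Cross

end Filtration

open CategoryTheory Limits Opposite

section LinearEquivOfKer

variable {R M N N' : Type*} [Ring R] [AddCommGroup M] [Module R M] [AddCommGroup N] [Module R N]
  [AddCommGroup N'] [Module R N'] (p : M →ₗ[R] N) (q : M →ₗ[R] N')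
  (hp : Function.Surjective p) (hq : Function.Surjective q)
  (h : LinearMap.ker p = LinearMap.ker q)

/-- The isomorphism between the targets of two surjective linear maps with the same kernel. -/
noncomputable def linearEquivOfKerEq : N ≃ₗ[R] N' :=
  (p.quotKerEquivOfSurjective hp).symm ≪≫ₗ Submodule.quotEquivOfEq _ _ h ≪≫ₗ
    q.quotKerEquivOfSurjective hq

theorem linearEquivOfKerEq_apply (z : M) : linearEquivOfKerEq p q hp hq h (p z) = q z := by
  have hz : (p.quotKerEquivOfSurjective hp).symm (p z) = Submodule.Quotient.mk z :=
    (LinearEquiv.symm_apply_eq _).2 rfl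
  simp only [linearEquivOfKerEq, LinearEquiv.trans_apply, hz, Submodule.quotEquivOfEq_mk,
    LinearMap.quotKerEquivOfSurjective_apply_mk]

end LinearEquivOfKer

section ExtComparison

universe v w

variable {R C : Type*} [CommRing R] [Category.{v} C] [Abelian C] [Linear R C]

section Cocycles

variable (R) {X X' : C} (P : ProjectiveResolution X)
  (P' : ProjectiveResolution X') (Y : C) (n : ℕ)

/-- The contravariant functor `Hom(-, Y)`, in the variance in which Mathlib derives it to define
`Ext R C n`. -/
noncomputable abbrev homFunctor : C ⥤ (ModuleCat.{v} R)ᵒᵖ :=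
  ((linearYoneda R C).obj Y).rightOp

/-- The complex `Hom(P, Y)`, as a chain complex in the opposite category. -/
noncomputable abbrev homComplex : ChainComplex (ModuleCat.{v} R)ᵒᵖ ℕ :=
  ((homFunctor R Y).mapHomologicalComplex _).obj P.complex

/-- The module of `n`-cocycles of `Hom(P, Y)`. -/
noncomputable abbrev cocycles : ModuleCat.{v} R :=
  ((homComplex R P Y).opcycles n).unop

/-- The morphism `Pₙ ⟶ Y` underlying a cocycle. -/
noncomputable def cocyclesι : cocycles R P Y n ⟶ ModuleCat.of R (P.complex.X n ⟶ Y) :=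
  ((homComplex R P Y).pOpcycles n).unop

variable {Y n}

theorem exists_cocyclesι_eq_iff (f : P.complex.X n ⟶ Y) :
    (∃ z, cocyclesι R P Y n z = f) ↔ P.complex.d (n + 1) n ≫ f = 0 := by
  have h : (ShortComplex.mk ((homComplex R P Y).d (n + 1) n) ((homComplex R P Y).pOpcycles n)
      (HomologicalComplex.d_pOpcycles _ _ _)).Exact :=
    ShortComplex.exact_of_g_is_cokernel _
      ((homComplex R P Y).opcyclesIsCokernel (n + 1) n (by simp))
  exact ((ShortComplex.ShortExact.moduleCat_exact_iff_function_exact _).1 h.unop f).symm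

theorem d_comp_cocyclesι (z : cocycles R P Y n) :
    P.complex.d (n + 1) n ≫ cocyclesι R P Y n z = 0 :=
  (exists_cocyclesι_eq_iff R P _).1 ⟨z, rfl⟩

theorem cocyclesι_injective : Function.Injective (cocyclesι R P Y n) :=
  (ModuleCat.mono_iff_injective _).1 (unop_mono_of_epi _)

section

variable [HasExt.{w} C]

variable (Y n) in
/-- The class of a cocycle in `Ext`, as defined by the derived category. -/
noncomputable def cocyclesToAbelianExt : cocycles R P Y n →ₗ[R] Abelian.Ext.{w} X Y n where
  toFun z := P.extMk (cocyclesι R P Y n z) (n + 1) rfl (d_comp_cocyclesι R P z)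
  map_add' z z' := by simp only [P.add_extMk, map_add]
  map_smul' r z := by
    simp [Abelian.Ext.smul_eq_comp_mk₀, P.extMk_comp_mk₀]

variable (Y n) in
theorem cocyclesToAbelianExt_surjective :
    Function.Surjective (cocyclesToAbelianExt.{v, w} R P Y n) := by
  intro a
  obtain ⟨f, hf, rfl⟩ := P.extMk_surjective a (n + 1) rfl
  obtain ⟨z, rfl⟩ := (exists_cocyclesι_eq_iff R P f).2 hf
  exact ⟨z, rfl⟩

variable {P P'} in
theorem mk₀_comp_cocyclesToAbelianExt {g : X' ⟶ X} (φ : P'.Hom P g) {z : cocycles R P Y n}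
    {z' : cocycles R P' Y n} (h : cocyclesι R P' Y n z' = φ.hom.f n ≫ cocyclesι R P Y n z) :
    (Abelian.Ext.mk₀ g).comp (cocyclesToAbelianExt.{v, w} R P Y n z) (zero_add n) =
      cocyclesToAbelianExt R P' Y n z' := by
  simp only [cocyclesToAbelianExt, LinearMap.coe_mk, AddHom.coe_mk,
    P.mk₀_comp_extMk _ _ rfl (d_comp_cocyclesι R P z) φ, h]

end

variable [EnoughProjectives C]

variable (Y n) in
/-- `Ext`, as defined by derived functors, is the homology of `Hom(P, Y)`. -/
noncomputable def homologyIsoExt :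
    ((homComplex R P Y).homology n).unop ≅ ((_root_.Ext R C n).obj (op X)).obj Y :=
  (P.isoLeftDerivedObj (homFunctor R Y) n).unop

variable (Y n) in
/-- The class of a cocycle in `Ext`, as defined by derived functors. -/
noncomputable def cocyclesToExt :
    cocycles R P Y n ⟶ ((_root_.Ext R C n).obj (op X)).obj Y :=
  ((homComplex R P Y).homologyι n).unop ≫ (homologyIsoExt R P Y n).hom

theorem cocyclesToExt_surjective : Function.Surjective (cocyclesToExt R P Y n) :=
  have : Epi ((homComplex R P Y).homologyι n).unop := unop_epi_of_mono _
  (ModuleCat.epi_iff_surjective _).1 (epi_comp _ _)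

theorem cocyclesToExt_eq_zero_iff (z : cocycles R P Y (n + 1)) :
    cocyclesToExt R P Y (n + 1) z = 0 ↔
      ∃ g : P.complex.X n ⟶ Y, P.complex.d (n + 1) n ≫ g = cocyclesι R P Y (n + 1) z := by
  have hexact : (ShortComplex.mk ((homComplex R P Y).homologyι (n + 1))
      ((homComplex R P Y).fromOpcycles (n + 1) n) (by simp)).Exact :=
    ShortComplex.exact_of_f_is_kernel _
      ((homComplex R P Y).homologyIsKernel (n + 1) n (by simp))
  have hd (g : P.complex.X n ⟶ Y) : cocyclesι R P Y (n + 1)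
      (((homComplex R P Y).fromOpcycles (n + 1) n).unop g) = P.complex.d (n + 1) n ≫ g :=
    congr(ModuleCat.Hom.hom $(congr_arg Quiver.Hom.unop
      (HomologicalComplex.p_fromOpcycles (homComplex R P Y) (n + 1) n)) g)
  have hiso := (ModuleCat.mono_iff_injective (homologyIsoExt R P Y (n + 1)).hom).1 inferInstance
  calc cocyclesToExt R P Y (n + 1) z = 0
      ↔ ((homComplex R P Y).homologyι (n + 1)).unop z = 0 := map_eq_zero_iff _ hiso
    _ ↔ ∃ g : P.complex.X n ⟶ Y, ((homComplex R P Y).fromOpcycles (n + 1) n).unop g = z :=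
      (ShortComplex.ShortExact.moduleCat_exact_iff_function_exact _).1 hexact.unop z
    _ ↔ _ := exists_congr fun g => by rw [← hd, (cocyclesι_injective R P).eq_iff]

variable {P P'}

theorem leftDerived_map_comp_homologyι {D : Type*} [Category* D] [Abelian D] (F : C ⥤ D)
    [F.Additive] {g : X' ⟶ X} (φ : P'.Hom P g) :
    (F.leftDerived n).map g ≫ (P.isoLeftDerivedObj F n).hom ≫
        (HomologicalComplex.natTransHomologyι D _ n).app _ =
      ((P'.isoLeftDerivedObj F n).hom ≫ (HomologicalComplex.natTransHomologyι D _ n).app _) ≫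
        (HomologicalComplex.opcyclesFunctor D _ n).map ((F.mapHomologicalComplex _).map φ.hom) := by
  have h := ProjectiveResolution.isoLeftDerivedObj_hom_naturality g P' P φ.hom
    (by simpa using φ.hom_f_zero_comp_π_f_zero) F n
  rw [Category.assoc, ← NatTrans.naturality, reassoc_of% h]

theorem exists_cocyclesι_eq_comp {g : X' ⟶ X} (φ : P'.Hom P g) (z : cocycles R P Y n) :
    ∃ z' : cocycles R P' Y n, cocyclesι R P' Y n z' = φ.hom.f n ≫ cocyclesι R P Y n z ∧
      cocyclesToExt R P' Y n z' =
        ((_root_.Ext R C n).map g.op).app Y (cocyclesToExt R P Y n z) := by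
  let ψ : homComplex R P' Y ⟶ homComplex R P Y :=
    ((homFunctor R Y).mapHomologicalComplex _).map φ.hom
  refine ⟨(HomologicalComplex.opcyclesMap ψ n).unop z, ?_, ?_⟩
  · exact congr(ModuleCat.Hom.hom $(congr_arg Quiver.Hom.unop
      (HomologicalComplex.p_opcyclesMap ψ n)) z)
  · exact congr(ModuleCat.Hom.hom $(congr_arg Quiver.Hom.unop
      (leftDerived_map_comp_homologyι (homFunctor R Y) φ).symm) z)

variable (P Y n)

theorem ker_cocyclesToExt [HasExt.{w} C] :
    LinearMap.ker (cocyclesToExt R P Y (n + 1)).hom =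
      LinearMap.ker (cocyclesToAbelianExt.{v, w} R P Y (n + 1)) :=
  Submodule.ext fun z => (cocyclesToExt_eq_zero_iff R P z).trans
    (P.extMk_eq_zero_iff _ _ rfl (d_comp_cocyclesι R P z) n rfl).symm

end Cocycles

variable (R) [EnoughProjectives C]

section

variable [HasExt.{w} C] {X X' : C} (Y : C) (n : ℕ)

/-- The two definitions of `Ext` agree in positive degrees. -/
noncomputable def extEquiv :
    ((_root_.Ext R C (n + 1)).obj (op X)).obj Y ≃ₗ[R] Abelian.Ext.{w} X Y (n + 1) :=
  linearEquivOfKerEq _ _ (cocyclesToExt_surjective R (projectiveResolution X))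
    (cocyclesToAbelianExt_surjective R _ Y (n + 1)) (ker_cocyclesToExt R _ Y n)

variable {Y n}

theorem extEquiv_cocyclesToExt (z : cocycles R (projectiveResolution X) Y (n + 1)) :
    extEquiv.{v, w} R Y n (cocyclesToExt R _ Y (n + 1) z) =
      cocyclesToAbelianExt R _ Y (n + 1) z :=
  linearEquivOfKerEq_apply ..

theorem extEquiv_map (g : X' ⟶ X) (a : ((_root_.Ext R C (n + 1)).obj (op X)).obj Y) :
    extEquiv.{v, w} R Y n (((_root_.Ext R C (n + 1)).map g.op).app Y a) =
      (Abelian.Ext.mk₀ g).comp (extEquiv R Y n a) (zero_add _) := by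
  let φ : (projectiveResolution X').Hom (projectiveResolution X) g :=
    ⟨ProjectiveResolution.lift g _ _, by simpa using ProjectiveResolution.lift_commutes_zero g _ _⟩
  obtain ⟨z, rfl⟩ := cocyclesToExt_surjective R (projectiveResolution X) a
  obtain ⟨z', hz', hclass⟩ := exists_cocyclesι_eq_comp R φ z
  rw [extEquiv_cocyclesToExt, mk₀_comp_cocyclesToAbelianExt R φ hz', ← hclass]
  exact extEquiv_cocyclesToExt R z'

end

variable [HasExt.{v} C]

/-- The contravariant functor `Extⁿ(-, Y)`, with `Ext` defined by the derived category. -/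
noncomputable def contravariantExt (Y : C) (n : ℕ) : Cᵒᵖ ⥤ ModuleCat.{v} R where
  obj X := ModuleCat.of R (Abelian.Ext X.unop Y n)
  map f := ModuleCat.ofHom ((Abelian.Ext.mk₀ f.unop).precompOfLinear R Y (zero_add n))
  map_id X := by ext; simp
  map_comp f g := by
    ext
    simp [← Abelian.Ext.mk₀_comp_mk₀_assoc]

/-- The two definitions of `Ext(-, Y)` agree as functors in positive degrees. -/
noncomputable def extCompEvaluationIso (Y : C) (n : ℕ) :
    _root_.Ext R C (n + 1) ⋙ (evaluation _ _).obj Y ≅ contravariantExt R Y (n + 1) :=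
  NatIso.ofComponents (fun X => (extEquiv.{v, v} R (X := X.unop) Y n).toModuleIso) fun f => by
    ext a
    exact extEquiv_map R f.unop a

end ExtComparison

section MayerVietoris

section DimensionShift

universe v

variable {C : Type*} [Category.{v} C] [Abelian C] [HasExt.{v} C] {S : ShortComplex C}
  (hS : S.ShortExact) {Y : C} {n : ℕ}

theorem extClass_comp_eq_zero_iff (z : Abelian.Ext.{v} S.X₁ Y n) :
    hS.extClass.comp z (Nat.add_comm 1 n) = 0 ↔
      ∃ y : Abelian.Ext.{v} S.X₂ Y n, (Abelian.Ext.mk₀ S.f).comp y (zero_add n) = z := by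
  refine ⟨Abelian.Ext.contravariant_sequence_exact₁ hS Y z (Nat.add_comm 1 n), ?_⟩
  rintro ⟨y, rfl⟩
  rw [← Abelian.Ext.comp_assoc_of_second_deg_zero, hS.extClass_comp, Abelian.Ext.zero_comp]

theorem exists_extClass_comp_eq [HasProjectiveDimensionLT S.X₂ (n + 1)]
    (z : Abelian.Ext.{v} S.X₃ Y (n + 1)) :
    ∃ y : Abelian.Ext.{v} S.X₁ Y n, hS.extClass.comp y (Nat.add_comm 1 n) = z :=
  have := HasProjectiveDimensionLT.subsingleton S.X₂ (n + 1) (n + 1) le_rfl Y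
  Abelian.Ext.contravariant_sequence_exact₃ hS Y z (Subsingleton.elim _ _) (Nat.add_comm 1 n)

theorem mk₀_comp_extClass_comp {S' : ShortComplex C} (hS' : S'.ShortExact) (φ : S ⟶ S')
    (z : Abelian.Ext.{v} S'.X₁ Y n) :
    (Abelian.Ext.mk₀ φ.τ₃).comp (hS'.extClass.comp z (Nat.add_comm 1 n)) (zero_add _) =
      hS.extClass.comp ((Abelian.Ext.mk₀ φ.τ₁).comp z (zero_add n)) (Nat.add_comm 1 n) := by
  rw [← Abelian.Ext.comp_assoc_of_second_deg_zero,
    ShortComplex.ShortExact.extClass_naturality hS hS' φ]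
  exact (Abelian.Ext.comp_assoc _ _ _ _ _ (by lia)).symm

variable (R : Type*) [CommRing R] [Linear R C] (Y n)

theorem extClass_precomp_bijective [HasProjectiveDimensionLT S.X₂ n] :
    Function.Bijective (hS.extClass.precompOfLinear R Y (Nat.add_comm 1 n)) := by
  have := HasProjectiveDimensionLT.subsingleton S.X₂ n n le_rfl Y
  have := hasProjectiveDimensionLT_of_ge S.X₂ n (n + 1) n.le_succ
  refine ⟨(injective_iff_map_eq_zero _).2 fun z hz => ?_, exists_extClass_comp_eq hS⟩
  obtain ⟨y, rfl⟩ := (extClass_comp_eq_zero_iff hS z).1 hz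
  rw [Subsingleton.elim y 0, Abelian.Ext.comp_zero]

/-- Dimension shifting along a functorial short exact sequence whose middle term has small
projective dimension. -/
noncomputable def contravariantExtShiftIso {J : Type*} [Category* J] {S : J ⥤ ShortComplex C}
    (hS : ∀ j, (S.obj j).ShortExact) [∀ j, HasProjectiveDimensionLT (S.obj j).X₂ n] :
    (S ⋙ ShortComplex.π₁).op ⋙ contravariantExt R Y n ≅
      (S ⋙ ShortComplex.π₃).op ⋙ contravariantExt R Y (n + 1) :=
  NatIso.ofComponents
    (fun j => (LinearEquiv.ofBijective _
      (extClass_precomp_bijective (hS j.unop) Y n R)).toModuleIso)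
    fun f => by
      ext z
      exact (mk₀_comp_extClass_comp (hS _) (hS _) (S.map f.unop) z).symm

end DimensionShift

variable {R : Type u} [CommRing R]

/-- A decreasing sequence of ideals as a functor. -/
def idealTower {F : ℕ → Ideal R} (hF : Antitone F) : ℕᵒᵖ ⥤ Ideal R where
  obj k := F k.unop
  map f := homOfLE (hF (leOfHom f.unop))

/-- The map `R/P → R/P'` when `P ≤ P'`. -/
noncomputable abbrev quotientMap {P P' : Ideal R} (h : P ≤ P') :
    ModuleCat.of R (R ⧸ P) ⟶ ModuleCat.of R (R ⧸ P') :=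
  ModuleCat.ofHom (Submodule.factor h)

/-- The sequence `0 → R/(P ∩ Q) → R/P × R/Q → R/(P + Q) → 0`. -/
noncomputable abbrev mayerVietorisComplex (P Q : Ideal R) : ShortComplex (ModuleCat.{u} R) :=
  ModuleCat.shortComplexOfCompEqZero
    ((Submodule.factor (inf_le_left : P ⊓ Q ≤ P)).prod (Submodule.factor inf_le_right))
    ((Submodule.factor (le_sup_left : P ≤ P ⊔ Q)).coprod (-Submodule.factor le_sup_right))
    (by ext; simp)

theorem mayerVietorisComplex_shortExact (P Q : Ideal R) :
    (mayerVietorisComplex P Q).ShortExact := by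
  apply ModuleCat.shortComplex_shortExact
  · rintro ⟨p, q⟩
    obtain ⟨p, rfl⟩ := Submodule.Quotient.mk_surjective P p
    obtain ⟨q, rfl⟩ := Submodule.Quotient.mk_surjective Q q
    refine ⟨fun h => ?_, ?_⟩
    · have hpq : p - q ∈ P ⊔ Q := (Submodule.Quotient.eq _).1 (sub_eq_zero.1
        ((sub_eq_add_neg _ _).trans h))
      obtain ⟨a, ha, b, hb, hab⟩ := Submodule.mem_sup.1 hpq
      refine ⟨Submodule.Quotient.mk (p - a), Prod.ext ?_ ?_⟩
      · exact (Submodule.Quotient.eq P).2 (show p - a - p ∈ P by simpa using ha)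
      · exact (Submodule.Quotient.eq Q).2 (show p - a - q ∈ Q by
          rwa [sub_right_comm, ← hab, add_sub_cancel_left])
    · rintro ⟨c, hc⟩
      rw [← hc]
      exact ShortComplex.moduleCat_zero_apply _ _
  · refine (injective_iff_map_eq_zero (mayerVietorisComplex P Q).f.hom).2 fun z hz => ?_
    obtain ⟨r, rfl⟩ := Submodule.Quotient.mk_surjective (P ⊓ Q) z
    exact (Submodule.Quotient.mk_eq_zero _).2
      ⟨(Submodule.Quotient.mk_eq_zero P).1 (congr_arg Prod.fst hz),
        (Submodule.Quotient.mk_eq_zero Q).1 (congr_arg Prod.snd hz)⟩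
  · intro z
    obtain ⟨r, rfl⟩ := Submodule.factor_surjective (le_sup_left : P ≤ P ⊔ Q) z
    exact ⟨(r, 0), by simp⟩

theorem hasProjectiveDimensionLT_mayerVietorisComplex_X₂ (P Q : Ideal R) (n : ℕ)
    [HasProjectiveDimensionLT (ModuleCat.of R (R ⧸ P)) n]
    [HasProjectiveDimensionLT (ModuleCat.of R (R ⧸ Q)) n] :
    HasProjectiveDimensionLT (mayerVietorisComplex P Q).X₂ n :=
  hasProjectiveDimensionLT_of_iso
    (ModuleCat.biprodIsoProd (.of R (R ⧸ P)) (.of R (R ⧸ Q))) n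

/-- The Mayer–Vietoris sequences of two decreasing sequences of ideals. -/
noncomputable def mayerVietorisFunctor {P Q : ℕ → Ideal R} (hP : Antitone P) (hQ : Antitone Q) :
    ℕᵒᵖ ⥤ ShortComplex (ModuleCat.{u} R) where
  obj k := mayerVietorisComplex (P k.unop) (Q k.unop)
  map f :=
    { τ₁ := quotientMap (inf_le_inf (hP (leOfHom f.unop)) (hQ (leOfHom f.unop)))
      τ₂ := ModuleCat.ofHom ((Submodule.factor (hP (leOfHom f.unop))).prodMap
        (Submodule.factor (hQ (leOfHom f.unop))))
      τ₃ := quotientMap (sup_le_sup (hP (leOfHom f.unop)) (hQ (leOfHom f.unop)))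
      comm₁₂ := by ext <;> rfl
      comm₂₃ := by ext <;> rfl }
  map_id k := by ext <;> rfl
  map_comp f g := by ext <;> rfl

/-- The sequence of cyclic modules `R/F k` of a decreasing sequence of ideals. -/
noncomputable def cyclicModules {F : ℕ → Ideal R} (hF : Antitone F) : ℕᵒᵖ ⥤ ModuleCat.{u} R :=
  localCohomology.ringModIdeals (idealTower hF)

/-- The Mayer–Vietoris connecting maps, when the middle terms have small projective dimension. -/
noncomputable def mayerVietorisExtIso {P Q : ℕ → Ideal R} (hP : Antitone P) (hQ : Antitone Q)
    (Y : ModuleCat.{u} R) (n : ℕ)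
    [∀ k, HasProjectiveDimensionLT (ModuleCat.of R (R ⧸ P k)) n]
    [∀ k, HasProjectiveDimensionLT (ModuleCat.of R (R ⧸ Q k)) n] :
    (cyclicModules (hP.inf hQ)).op ⋙ contravariantExt R Y n ≅
      (cyclicModules (hP.sup hQ)).op ⋙ contravariantExt R Y (n + 1) :=
  have (k : ℕᵒᵖ) : HasProjectiveDimensionLT ((mayerVietorisFunctor hP hQ).obj k).X₂ n :=
    hasProjectiveDimensionLT_mayerVietorisComplex_X₂ _ _ n
  contravariantExtShiftIso (S := mayerVietorisFunctor hP hQ) Y n R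
    fun _ => mayerVietorisComplex_shortExact _ _

end MayerVietoris

section LocalCohomology

variable {R : Type u} [CommRing R] {F : ℕ → Ideal R} {I : Ideal R}

/-- A decreasing sequence of ideals defining the same topology as the powers of `I`. -/
structure IsCofinalWithPowers (F : ℕ → Ideal R) (I : Ideal R) : Prop where
  antitone : Antitone F
  exists_pow_le (k : ℕ) : ∃ n, I ^ n ≤ F k
  exists_le_pow (n : ℕ) : ∃ k, F k ≤ I ^ n

namespace IsCofinalWithPowers

theorem pow (I : Ideal R) : IsCofinalWithPowers (fun k => I ^ k) I where
  antitone _ _ := Ideal.pow_le_pow_right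
  exists_pow_le k := ⟨k, le_rfl⟩
  exists_le_pow n := ⟨n, le_rfl⟩

theorem of_le_of_pow_le {K : Ideal R} (h : IsCofinalWithPowers F K) (hIK : I ≤ K) {c : ℕ}
    (hKI : K ^ c ≤ I) : IsCofinalWithPowers F I where
  antitone := h.antitone
  exists_pow_le k := (h.exists_pow_le k).imp fun _ => (Ideal.pow_right_mono hIK _).trans
  exists_le_pow n := (h.exists_le_pow (c * n)).imp fun _ hk =>
    hk.trans ((pow_mul K c n).le.trans (Ideal.pow_right_mono hKI n))

/-- The sequence, inside the category of all ideals which contain a power of `I`. -/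
def toContainsPower (h : IsCofinalWithPowers F I) :
    ℕᵒᵖ ⥤ ObjectProperty.FullSubcategory fun J : Ideal R => ∃ n, I ^ n ≤ J :=
  ObjectProperty.lift _ (idealTower h.antitone) fun k => h.exists_pow_le k.unop

theorem initial_toContainsPower (h : IsCofinalWithPowers F I) : h.toContainsPower.Initial where
  out J := by
    obtain ⟨n, hn⟩ := J.2
    obtain ⟨k, hk⟩ := h.exists_le_pow n
    have : Nonempty (CostructuredArrow h.toContainsPower J) :=
      ⟨CostructuredArrow.mk (Y := op k) ⟨homOfLE (hk.trans hn)⟩⟩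
    refine zigzag_isConnected fun a b => Relation.ReflTransGen.single ?_
    rcases le_total a.left.unop b.left.unop with hab | hab
    · exact .inr ⟨CostructuredArrow.homMk (homOfLE hab).op rfl⟩
    · exact .inl ⟨CostructuredArrow.homMk (homOfLE hab).op rfl⟩

theorem inf_of_inf_le_mul {P Q : ℕ → Ideal R} {I J : Ideal R} (hP : IsCofinalWithPowers P I)
    (hQ : IsCofinalWithPowers Q J) (h : ∀ k, P k ⊓ Q k ≤ P k * Q k) :
    IsCofinalWithPowers (P ⊓ Q) (I * J) where
  antitone := hP.antitone.inf hQ.antitone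
  exists_pow_le k := by
    obtain ⟨m, hm⟩ := hP.exists_pow_le k
    obtain ⟨n, hn⟩ := hQ.exists_pow_le k
    refine ⟨m + n, (mul_pow I J (m + n)).le.trans (Ideal.mul_le_inf.trans (inf_le_inf ?_ ?_))⟩
    · exact (Ideal.pow_le_pow_right (m.le_add_right n)).trans hm
    · exact (Ideal.pow_le_pow_right (n.le_add_left m)).trans hn
  exists_le_pow n := by
    obtain ⟨k, hk⟩ := hP.exists_le_pow n
    obtain ⟨l, hl⟩ := hQ.exists_le_pow n
    refine ⟨max k l, (h _).trans ?_⟩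
    rw [mul_pow]
    exact Ideal.mul_mono ((hP.antitone (le_max_left k l)).trans hk)
      ((hQ.antitone (le_max_right k l)).trans hl)

/-- The colimit of `Ext(R/Fₖ, -)` is the same for all sequences cofinal with the powers of `I`. -/
noncomputable def ofDiagramIso (h : IsCofinalWithPowers F I) (i : ℕ) :
    localCohomology.ofDiagram.{u, u}
        (ObjectProperty.ι fun J : Ideal R => ∃ n, I ^ n ≤ J) i ≅
      localCohomology.ofDiagram.{u, 0} (idealTower h.antitone) i :=
  have := h.initial_toContainsPower
  (localCohomology.isoOfFinal.{u, u, 0} h.toContainsPower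
    (ObjectProperty.ι fun J : Ideal R => ∃ n, I ^ n ≤ J) i).symm ≪≫
    HasColimit.isoOfNatIso (Iso.refl _)

/-- Local cohomology, computed by a sequence of ideals cofinal with the powers of `I`. -/
noncomputable def localCohomologyIso (h : IsCofinalWithPowers F I) (i : ℕ) :
    localCohomology I i ≅ localCohomology.ofDiagram.{u, 0} (idealTower h.antitone) i :=
  ((pow I).ofDiagramIso i).symm ≪≫ h.ofDiagramIso i

/-- `Hⁱ⁺¹_I(Y)` as the colimit of `Extⁱ⁺¹(R/Fₖ, Y)`, with `Ext` defined by the derived category. -/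
noncomputable def localCohomologyObjIso (h : IsCofinalWithPowers F I) (Y : ModuleCat.{u} R)
    (i : ℕ) : (localCohomology I (i + 1)).obj Y ≅
      colimit ((cyclicModules h.antitone).op ⋙ contravariantExt R Y (i + 1)) :=
  (h.localCohomologyIso (i + 1)).app Y ≪≫ colimitObjIsoColimitCompEvaluation _ Y ≪≫
    HasColimit.isoOfNatIso
      (Functor.isoWhiskerLeft (cyclicModules h.antitone).op (extCompEvaluationIso R Y i))

end IsCofinalWithPowers

/-- The connecting map of the Mayer–Vietoris sequence, in the degree above which
`Ext(R/Pₖ, -)` and `Ext(R/Qₖ, -)` vanish. -/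
noncomputable def localCohomologyMayerVietorisIso {P Q : ℕ → Ideal R} {I J : Ideal R}
    (hP : Antitone P) (hQ : Antitone Q)
    (hI : IsCofinalWithPowers (P ⊓ Q) I) (hJ : IsCofinalWithPowers (P ⊔ Q) J)
    (Y : ModuleCat.{u} R) (n : ℕ)
    [∀ k, HasProjectiveDimensionLT (ModuleCat.of R (R ⧸ P k)) (n + 1)]
    [∀ k, HasProjectiveDimensionLT (ModuleCat.of R (R ⧸ Q k)) (n + 1)] :
    (localCohomology I (n + 1)).obj Y ≅ (localCohomology J (n + 2)).obj Y :=
  hI.localCohomologyObjIso Y n ≪≫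
    HasColimit.isoOfNatIso (mayerVietorisExtIso hP hQ Y (n + 1)) ≪≫
    (hJ.localCohomologyObjIso Y (n + 1)).symm

end LocalCohomology

section KoszulTower

variable {R : Type u} [CommRing R]

section Generator

variable {J : Ideal R} {n : ℕ}

/-- `e` generates `Extⁿ(R/J, R)` and has annihilator `J`. -/
structure IsExtGenerator (e : Abelian.Ext.{u} (ModuleCat.of R (R ⧸ J)) (ModuleCat.of R R) n) :
    Prop where
  exists_smul_eq (z : Abelian.Ext.{u} (ModuleCat.of R (R ⧸ J)) (ModuleCat.of R R) n) :
    ∃ r : R, r • e = z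
  smul_eq_zero_iff (r : R) : r • e = 0 ↔ r ∈ J

theorem isExtGenerator_bot :
    IsExtGenerator (J := (⊥ : Ideal R)) (Abelian.Ext.mk₀
      (ModuleCat.ofHom (Submodule.quotEquivOfEqBot (⊥ : Ideal R) rfl).toLinearMap)) where
  exists_smul_eq z := by
    obtain ⟨g, rfl⟩ := (Abelian.Ext.mk₀_bijective _ _).2 z
    refine ⟨g.hom (Submodule.Quotient.mk 1), ?_⟩
    rw [← Abelian.Ext.mk₀_smul]
    congr 1
    ext
    exact mul_one (g.hom (Submodule.Quotient.mk 1))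
  smul_eq_zero_iff r := by
    rw [← Abelian.Ext.mk₀_smul, Abelian.Ext.mk₀_eq_zero_iff, Ideal.mem_bot]
    refine ⟨fun h => ?_, fun h => by rw [h, zero_smul]⟩
    exact (mul_one r).symm.trans congr(ModuleCat.Hom.hom $h (Submodule.Quotient.mk 1))

/-- The sequence `0 → R/J → R/J → R/(J + (a)) → 0` given by multiplication by `a`. -/
noncomputable abbrev mulComplex (J : Ideal R) (a : R) : ShortComplex (ModuleCat.{u} R) :=
  ShortComplex.mk (a • 𝟙 (ModuleCat.of R (R ⧸ J)))
    (quotientMap (le_sup_left : J ≤ J ⊔ Ideal.span {a})) (by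
      ext
      exact (Submodule.Quotient.mk_eq_zero _).2 (Ideal.mul_mem_right _ _
        (Ideal.mem_sup_right (Ideal.mem_span_singleton_self a))))

variable {a : R}

theorem mulComplex_shortExact (ha : ∀ r, a * r ∈ J → r ∈ J) : (mulComplex J a).ShortExact := by
  apply ModuleCat.shortComplex_shortExact
  · intro z
    obtain ⟨r, rfl⟩ := Submodule.Quotient.mk_surjective J z
    refine ⟨fun h => ?_, ?_⟩
    · obtain ⟨j, hj, b, hb, rfl⟩ := Submodule.mem_sup.1 ((Submodule.Quotient.mk_eq_zero _).1 h)
      obtain ⟨c, rfl⟩ := Ideal.mem_span_singleton'.1 hb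
      exact ⟨Submodule.Quotient.mk c, (Submodule.Quotient.eq J).2
        (show a * c - (j + c * a) ∈ J by simpa [mul_comm] using hj)⟩
    · rintro ⟨c, hc⟩
      rw [← hc]
      exact ShortComplex.moduleCat_zero_apply _ _
  · refine (injective_iff_map_eq_zero (mulComplex J a).f.hom).2 fun z hz => ?_
    obtain ⟨r, rfl⟩ := Submodule.Quotient.mk_surjective J z
    exact (Submodule.Quotient.mk_eq_zero J).2 (ha r ((Submodule.Quotient.mk_eq_zero J).1 hz))
  · exact Submodule.factor_surjective (le_sup_left : J ≤ J ⊔ Ideal.span {a})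

theorem IsExtGenerator.extClass_comp
    {e : Abelian.Ext.{u} (ModuleCat.of R (R ⧸ J)) (ModuleCat.of R R) n} (he : IsExtGenerator e)
    [HasProjectiveDimensionLT (ModuleCat.of R (R ⧸ J)) (n + 1)]
    (ha : ∀ r, a * r ∈ J → r ∈ J) :
    IsExtGenerator (J := J ⊔ Ideal.span {a})
      ((mulComplex_shortExact ha).extClass.comp e (Nat.add_comm 1 n)) where
  exists_smul_eq z := by
    obtain ⟨y, rfl⟩ := exists_extClass_comp_eq (mulComplex_shortExact ha) z
    obtain ⟨r, rfl⟩ := he.exists_smul_eq y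
    exact ⟨r, (Abelian.Ext.comp_smul _ _ _ _).symm⟩
  smul_eq_zero_iff r := by
    rw [← Abelian.Ext.comp_smul, extClass_comp_eq_zero_iff, Submodule.mem_sup]
    simp only [Ideal.mem_span_singleton', exists_exists_eq_and]
    constructor
    · rintro ⟨y, hy⟩
      obtain ⟨s, rfl⟩ := he.exists_smul_eq y
      refine ⟨r - s * a, (he.smul_eq_zero_iff _).1 ?_, s, by ring⟩
      rw [sub_smul, ← hy]
      simp [mul_smul, Abelian.Ext.mk₀_smul]
    · rintro ⟨j, hj, c, rfl⟩
      refine ⟨c • e, ?_⟩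
      rw [add_smul, (he.smul_eq_zero_iff j).2 hj]
      simp [mul_smul, Abelian.Ext.mk₀_smul]

/-- For `a = b * c`, the map between the sequences of `a` and `b` which is multiplication by `c`
on the first terms. -/
noncomputable def mulComplexMap {J K : Ideal R} (h : J ≤ K) {a b c : R} (hbc : b * c = a) :
    mulComplex J a ⟶ mulComplex K b where
  τ₁ := c • quotientMap h
  τ₂ := quotientMap h
  τ₃ := quotientMap (sup_le_sup h (Ideal.span_singleton_le_span_singleton.2 ⟨c, hbc.symm⟩))
  comm₁₂ := by
    ext
    exact congr_arg Submodule.Quotient.mk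
      (show b * (c * 1) = a * 1 by rw [← mul_assoc, hbc])
  comm₂₃ := by
    ext
    rfl

end Generator

/-- A decreasing sequence of ideals for which `Extⁿ(R/Fₖ, R) ≃ R/Fₖ`, with transition maps the
multiplications by powers of `w`, as happens for `Fₖ = (x₁ᵏ, …, xₙᵏ)` and `w = x₁ ⋯ xₙ`. -/
structure KoszulTower (F : ℕ → Ideal R) (w : R) (n : ℕ) where
  antitone : Antitone F
  hasProjectiveDimensionLT (k : ℕ) :
    HasProjectiveDimensionLT (ModuleCat.of R (R ⧸ F k)) (n + 1)
  gen (k : ℕ) : Abelian.Ext.{u} (ModuleCat.of R (R ⧸ F k)) (ModuleCat.of R R) n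
  isExtGenerator (k : ℕ) : IsExtGenerator (gen k)
  map_gen {k l : ℕ} (h : k ≤ l) : (Abelian.Ext.mk₀ (quotientMap (antitone h))).comp (gen k)
    (zero_add n) = w ^ (l - k) • gen l

namespace KoszulTower

variable (R) in
/-- The tower of the empty sequence: `Ext⁰(R, R) = R`. -/
noncomputable def bot : KoszulTower (fun _ => (⊥ : Ideal R)) 1 0 where
  antitone := antitone_const
  hasProjectiveDimensionLT _ := by
    have : Module.Projective R (R ⧸ (⊥ : Ideal R)) :=
      Module.Projective.of_equiv (Submodule.quotEquivOfEqBot (⊥ : Ideal R) rfl).symm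
    exact (projective_iff_hasProjectiveDimensionLT_one).1
      ((IsProjective.iff_projective (R := R) _).1 this)
  gen _ := Abelian.Ext.mk₀
    (ModuleCat.ofHom (Submodule.quotEquivOfEqBot (⊥ : Ideal R) rfl).toLinearMap)
  isExtGenerator _ := isExtGenerator_bot
  map_gen h := by
    rw [one_pow, one_smul, Abelian.Ext.mk₀_comp_mk₀]
    congr 1
    ext
    rfl

variable {F : ℕ → Ideal R} {w : R} {n : ℕ}

/-- Adjoining to a tower the powers of an element which is regular modulo every `Fₖ`. -/
noncomputable def supSpanPow (G : KoszulTower F w n) {a : R}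
    (ha : ∀ k r, a ^ k * r ∈ F k → r ∈ F k) :
    KoszulTower (fun k => F k ⊔ Ideal.span {a ^ k}) (a * w) (n + 1) where
  antitone k l h := sup_le_sup (G.antitone h)
    (Ideal.span_singleton_le_span_singleton.2 (pow_dvd_pow a h))
  hasProjectiveDimensionLT k :=
    have := G.hasProjectiveDimensionLT k
    (mulComplex_shortExact (ha k)).hasProjectiveDimensionLT_X₃ (n + 1) inferInstance
      (hasProjectiveDimensionLT_of_ge _ (n + 1) (n + 2) (n + 1).le_succ)
  gen k := (mulComplex_shortExact (ha k)).extClass.comp (G.gen k) (Nat.add_comm 1 n)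
  isExtGenerator k :=
    have := G.hasProjectiveDimensionLT k
    (G.isExtGenerator k).extClass_comp (ha k)
  map_gen {k l} h := by
    have hpow : a ^ k * a ^ (l - k) = a ^ l := by rw [← pow_add, Nat.add_sub_cancel' h]
    refine (mk₀_comp_extClass_comp (mulComplex_shortExact (ha l)) (mulComplex_shortExact (ha k))
      (mulComplexMap (G.antitone h) hpow) (G.gen k)).trans ?_
    rw [mulComplexMap, Abelian.Ext.mk₀_smul, Abelian.Ext.smul_comp, G.map_gen h, smul_smul,
      ← mul_pow, Abelian.Ext.comp_smul]

theorem nontrivial_colimit (G : KoszulTower F w n) (hw : ∀ l, w ^ l ∉ F (l + 1)) :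
    Nontrivial (colimit ((cyclicModules G.antitone).op ⋙
      contravariantExt R (ModuleCat.of R R) n) : ModuleCat.{u} R) := by
  have : PreservesFilteredColimitsOfSize.{0, 0} (forget (ModuleCat.{u} R)) :=
    preservesFilteredColimitsOfSize_shrink.{0, u, 0, u} _
  by_contra hs
  have := not_nontrivial_iff_subsingleton.1 hs
  obtain ⟨l, f, g, hfg⟩ := Concrete.colimit_exists_of_rep_eq ((cyclicModules G.antitone).op ⋙
    contravariantExt R (ModuleCat.of R R) n) (i := op (op 1)) (j := op (op 1)) (G.gen 1) 0
    (Subsingleton.elim _ _)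
  have hl : 1 ≤ l.unop.unop := leOfHom f.unop.unop
  have h0 : w ^ (l.unop.unop - 1) • G.gen l.unop.unop = 0 := by
    rw [← G.map_gen hl]
    exact hfg.trans (map_zero _)
  apply hw (l.unop.unop - 1)
  rw [Nat.sub_add_cancel hl]
  exact ((G.isExtGenerator _).smul_eq_zero_iff _).1 h0

theorem nontrivial_localCohomology (G : KoszulTower F w (n + 1)) {I : Ideal R}
    (hF : IsCofinalWithPowers F I) (hw : ∀ l, w ^ l ∉ F (l + 1)) :
    Nontrivial ((localCohomology I (n + 1)).obj (ModuleCat.of R R)) :=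
  have := G.nontrivial_colimit hw
  (hF.localCohomologyObjIso (ModuleCat.of R R) n).toLinearEquiv.toEquiv.nontrivial

end KoszulTower

end KoszulTower

section VariablePowers

variable {σ : Type*} {A : Type u} [CommRing A]

/-- The ideal generated by the `k`-th powers of the variables in `T`. -/
noncomputable def varPowIdeal (A : Type u) [CommRing A] (T : Finset σ) (k : ℕ) :
    Ideal (MvPolynomial σ A) :=
  Ideal.span ((X · ^ k) '' (T : Set σ))

variable {S T : Finset σ} {k : ℕ}

theorem mem_varPowIdeal {f : MvPolynomial σ A} :
    f ∈ varPowIdeal A T k ↔ ∀ m ∈ f.support, ∃ i ∈ T, k ≤ m i := by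
  classical
  have hspan : varPowIdeal A T k = Ideal.span
      ((fun s => monomial s (1 : A)) '' ((fun i => Finsupp.single i k) '' (T : Set σ))) := by
    simp only [varPowIdeal, X_pow_eq_monomial, Set.image_image]
  simp [hspan, mem_ideal_span_monomial_image]

theorem X_pow_mem_varPowIdeal {i : σ} (hi : i ∈ T) (k : ℕ) : X i ^ k ∈ varPowIdeal A T k :=
  Ideal.subset_span ⟨i, hi, rfl⟩

theorem varPowIdeal_empty : varPowIdeal A (∅ : Finset σ) k = ⊥ := by
  simp [varPowIdeal]

theorem varPowIdeal_insert [DecidableEq σ] (a : σ) :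
    varPowIdeal A (insert a T) k = varPowIdeal A T k ⊔ Ideal.span {X a ^ k} := by
  rw [varPowIdeal, Finset.coe_insert, Set.image_insert_eq, Ideal.span_insert, sup_comm, varPowIdeal]

theorem varPowIdeal_union [DecidableEq σ] :
    varPowIdeal A (S ∪ T) k = varPowIdeal A S k ⊔ varPowIdeal A T k := by
  rw [varPowIdeal, Finset.coe_union, Set.image_union, Ideal.span_union, varPowIdeal, varPowIdeal]

theorem mem_varPowIdeal_of_X_pow_mul_mem {a : σ} (ha : a ∉ T) {n : ℕ} {f : MvPolynomial σ A}
    (hf : X a ^ n * f ∈ varPowIdeal A T k) : f ∈ varPowIdeal A T k := by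
  rw [mem_varPowIdeal] at hf ⊢
  intro m hm
  obtain ⟨i, hi, hk⟩ := hf (Finsupp.single a n + m) (by
    rwa [mem_support_iff, X_pow_eq_monomial, coeff_monomial_mul, one_mul, ← mem_support_iff])
  have hai : a ≠ i := fun h => ha (h ▸ hi)
  exact ⟨i, hi, by simpa [hai] using hk⟩

theorem nonempty_koszulTower_varPowIdeal (T : Finset σ) {n : ℕ} (hn : T.card = n) :
    Nonempty (KoszulTower (varPowIdeal A T) (∏ i ∈ T, X i) n) := by
  classical
  subst hn
  induction T using Finset.induction_on with
  | empty =>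
    have hbot : varPowIdeal A (∅ : Finset σ) = fun _ => ⊥ := funext fun _ => varPowIdeal_empty
    rw [Finset.prod_empty, Finset.card_empty, hbot]
    exact ⟨KoszulTower.bot (MvPolynomial σ A)⟩
  | insert a T ha ih =>
    obtain ⟨G⟩ := ih
    have hsup : varPowIdeal A (insert a T) = fun k => varPowIdeal A T k ⊔ Ideal.span {X a ^ k} :=
      funext fun _ => varPowIdeal_insert a
    rw [Finset.prod_insert ha, Finset.card_insert_of_notMem ha, hsup]
    exact ⟨G.supSpanPow fun k r => mem_varPowIdeal_of_X_pow_mul_mem ha⟩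

theorem prod_X_pow_notMem_varPowIdeal [Nontrivial A] (T : Finset σ) (l : ℕ) :
    (∏ i ∈ T, X i) ^ l ∉ varPowIdeal A T (l + 1) := by
  classical
  have hprod : (∏ i ∈ T, X i : MvPolynomial σ A) ^ l =
      monomial (∑ i ∈ T, Finsupp.single i l) 1 := by
    simp only [← Finset.prod_pow, X_pow_eq_monomial, monomial_sum_one]
  rw [hprod, mem_varPowIdeal]
  intro h
  obtain ⟨i, hi, hl⟩ := h (∑ i ∈ T, Finsupp.single i l) (by simp)
  simp [Finsupp.single_apply, hi] at hl

theorem isCofinalWithPowers_varPowIdeal (T : Finset σ) :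
    IsCofinalWithPowers (varPowIdeal A T) (varPowIdeal A T 1) where
  antitone _ _ hkl _ hf := mem_varPowIdeal.2 fun m hm =>
    (mem_varPowIdeal.1 hf m hm).imp fun _ => And.imp_right hkl.trans
  exists_pow_le k := by
    refine Ideal.exists_pow_le_of_le_radical_of_fg (Ideal.span_le.2 ?_)
      (Submodule.fg_span (T.finite_toSet.image _))
    rintro _ ⟨i, hi, rfl⟩
    exact ⟨k, by simpa using X_pow_mem_varPowIdeal hi k⟩
  exists_le_pow n := by
    refine ⟨n, Ideal.span_le.2 ?_⟩
    rintro _ ⟨i, hi, rfl⟩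
    exact Ideal.pow_mem_pow (by simpa using X_pow_mem_varPowIdeal hi 1) n

theorem varPowIdeal_inf_le_mul (h : Disjoint S T) (k : ℕ) :
    varPowIdeal A S k ⊓ varPowIdeal A T k ≤ varPowIdeal A S k * varPowIdeal A T k := by
  rintro f ⟨hS, hT⟩
  rw [← support_sum_monomial_coeff f]
  refine Ideal.sum_mem _ fun m hm => ?_
  obtain ⟨i, hi, him⟩ := mem_varPowIdeal.1 hS m hm
  obtain ⟨j, hj, hjm⟩ := mem_varPowIdeal.1 hT m hm
  have hij : i ≠ j := fun hij => Finset.disjoint_left.1 h hi (hij ▸ hj)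
  have hle : Finsupp.single i k + Finsupp.single j k ≤ m := by
    classical
    intro t
    by_cases hit : i = t
    · subst hit
      simpa [hij.symm] using him
    · by_cases hjt : j = t
      · subst hjt
        simpa [hit] using hjm
      · simp [hit, hjt]
  have hfactor : monomial m (f.coeff m) = monomial (m - (Finsupp.single i k + Finsupp.single j k))
      (f.coeff m) * (X i ^ k * X j ^ k) := by
    rw [X_pow_eq_monomial, X_pow_eq_monomial, monomial_mul, monomial_mul,
      tsub_add_cancel_of_le hle, mul_one, mul_one]
  rw [hfactor]
  exact Ideal.mul_mem_left _ _
    (Ideal.mul_mem_mul (X_pow_mem_varPowIdeal hi k) (X_pow_mem_varPowIdeal hj k))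

theorem isCofinalWithPowers_varPowIdeal_inf (h : Disjoint S T) :
    IsCofinalWithPowers (varPowIdeal A S ⊓ varPowIdeal A T)
      (varPowIdeal A S 1 * varPowIdeal A T 1) :=
  (isCofinalWithPowers_varPowIdeal S).inf_of_inf_le_mul (isCofinalWithPowers_varPowIdeal T)
    (varPowIdeal_inf_le_mul h)

end VariablePowers

section CrossIdeal

variable {R : Type*} [CommRing R]

theorem exists_span_mul_span_pow_le_span_range_cross (x y z w : R) :
    ∃ c, (Ideal.span {x, y} * Ideal.span {z, w}) ^ c ≤
      Ideal.span (Set.range ![x * z, y * w, x * w + y * z]) := by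
  set I := Ideal.span (Set.range ![x * z, y * w, x * w + y * z])
  have hxz : x * z ∈ I := Ideal.subset_span ⟨0, rfl⟩
  have hyw : y * w ∈ I := Ideal.subset_span ⟨1, rfl⟩
  have hsum : x * w + y * z ∈ I := Ideal.subset_span ⟨2, rfl⟩
  have hxw : x * w ∈ I.radical := by
    refine ⟨2, ?_⟩
    have hsq : (x * w) ^ 2 = x * w * (x * w + y * z) - x * z * (y * w) := by ring
    rw [hsq]
    exact I.sub_mem (I.mul_mem_left _ hsum) (I.mul_mem_left _ hyw)
  have hyz : y * z ∈ I.radical := by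
    simpa using I.radical.sub_mem (I.le_radical hsum) hxw
  refine Ideal.exists_pow_le_of_le_radical_of_fg ?_
    ((Submodule.fg_span (by simp)).mul (Submodule.fg_span (by simp)))
  rw [Ideal.span_mul_span', Ideal.span_le, Set.mul_subset_iff]
  rintro _ (rfl | rfl) _ (rfl | rfl)
  exacts [I.le_radical hxz, hxw, hyz, I.le_radical hyw]

end CrossIdeal

section TwoPlanes

variable {A : Type u} [CommRing A]

theorem isCofinalWithPowers_cross :
    IsCofinalWithPowers (varPowIdeal A {0, 1} ⊓ varPowIdeal A {2, 3})
      (Ideal.span (Set.range (![X 0 * X 2, X 1 * X 3, X 0 * X 3 + X 1 * X 2] :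
        Fin 3 → MvPolynomial (Fin 4) A))) := by
  obtain ⟨c, hc⟩ := exists_span_mul_span_pow_le_span_range_cross
    (X 0 : MvPolynomial (Fin 4) A) (X 1) (X 2) (X 3)
  have h := isCofinalWithPowers_varPowIdeal_inf (A := A)
    (by decide : Disjoint ({0, 1} : Finset (Fin 4)) {2, 3})
  simp only [varPowIdeal, pow_one, Finset.coe_pair, Set.image_pair] at h ⊢
  exact h.of_le_of_pow_le (span_range_cross_le _ _ _ _) hc

theorem isCofinalWithPowers_varPowIdeal_univ :
    IsCofinalWithPowers (varPowIdeal A (Finset.univ : Finset (Fin 4)))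
      (Ideal.span {X 0, X 1, X 2, X 3}) := by
  have hrange : Set.range (X : Fin 4 → MvPolynomial (Fin 4) A) = {X 0, X 1, X 2, X 3} := by
    ext f
    simp [Fin.exists_fin_succ, eq_comm]
  have h := isCofinalWithPowers_varPowIdeal (A := A) (Finset.univ : Finset (Fin 4))
  have hone : varPowIdeal A (Finset.univ : Finset (Fin 4)) 1 =
      Ideal.span {X 0, X 1, X 2, X 3} := by
    simp [varPowIdeal, hrange]
  rwa [hone] at h

theorem varPowIdeal_pair_sup_varPowIdeal_pair : varPowIdeal A {0, 1} ⊔ varPowIdeal A {2, 3} =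
    varPowIdeal A (Finset.univ : Finset (Fin 4)) :=
  funext fun k => (varPowIdeal_union (A := A)).symm.trans
    (congr_arg (varPowIdeal A · k) (by decide : ({0, 1} ∪ {2, 3} : Finset (Fin 4)) = .univ))

end TwoPlanes

theorem content_zero_nonzero_localCohomology_general
    (A : Type u) [CommRing A] [Nontrivial A] :
    let R := MvPolynomial (Fin 4) A
    let x : R := X 0
    let y : R := X 1
    let u : R := X 2
    let v : R := X 3
    let xseq : Fin 3 → R := ![x * u, y * v, x * v + y * u]
    let I : Ideal R := Ideal.span (Set.range xseq)
    let m : Ideal R := Ideal.span {x, y, u, v}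
    Nonempty ((localCohomology I 3).obj (ModuleCat.of R R) ≅
        (localCohomology m 4).obj (ModuleCat.of R R)) ∧
    Nontrivial ((localCohomology m 4).obj (ModuleCat.of R R)) ∧
    content xseq R = 0 ∧
    ucontent xseq R = 0 ∧
    ¬ IsQSequence xseq := by
  intro R x y u v xseq I m
  have hm : IsCofinalWithPowers (varPowIdeal A Finset.univ) m :=
    isCofinalWithPowers_varPowIdeal_univ
  have hsup : IsCofinalWithPowers (varPowIdeal A {0, 1} ⊔ varPowIdeal A {2, 3}) m := by
    rwa [varPowIdeal_pair_sup_varPowIdeal_pair]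
  have hchain := hasCyclicChain_powerIdeal_cross x y u v
  obtain ⟨P⟩ := nonempty_koszulTower_varPowIdeal (σ := Fin 4) (A := A) (n := 2) {0, 1} rfl
  obtain ⟨Q⟩ := nonempty_koszulTower_varPowIdeal (σ := Fin 4) (A := A) (n := 2) {2, 3} rfl
  obtain ⟨G⟩ := nonempty_koszulTower_varPowIdeal (A := A) Finset.univ (Finset.card_fin 4)
  have := P.hasProjectiveDimensionLT
  have := Q.hasProjectiveDimensionLT
  exact ⟨⟨localCohomologyMayerVietorisIso P.antitone Q.antitone isCofinalWithPowers_cross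
      hsup (ModuleCat.of R R) 2⟩,
    G.nontrivial_localCohomology hm (prod_X_pow_notMem_varPowIdeal Finset.univ),
    content_eq_zero (by norm_num : 2 < 3) hchain,
    ucontent_eq_zero (by norm_num : 2 < 3) hchain,
    not_isQSequence (by norm_num : 2 < 3) hchain⟩

/-- In `R = A[x,y,u,v]` with `x₁ = xu`, `x₂ = yv`, `x₃ = xv + yu`
and `I = (x₁,x₂,x₃)`, one has `H³_I(R) ≅ H⁴_{(x,y,u,v)}(R) ≠ 0`, yet
`𝔥³_x(R) = 0` and `𝔥̲³_x(R) = 0`; in particular `x₁, x₂, x₃` is not a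
Q-sequence in `R`. -/
theorem content_zero_nonzero_localCohomology
    (A : Type u) [CommRing A] [IsNoetherianRing A] [Nontrivial A] :
    let R := MvPolynomial (Fin 4) A
    let x : R := X 0
    let y : R := X 1
    let u : R := X 2
    let v : R := X 3
    let xseq : Fin 3 → R := ![x * u, y * v, x * v + y * u]
    let I : Ideal R := Ideal.span (Set.range xseq)
    let m : Ideal R := Ideal.span {x, y, u, v}
    Nonempty ((localCohomology I 3).obj (ModuleCat.of R R) ≅
        (localCohomology m 4).obj (ModuleCat.of R R)) ∧
    Nontrivial ((localCohomology m 4).obj (ModuleCat.of R R)) ∧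
    content xseq R = 0 ∧
    ucontent xseq R = 0 ∧
    ¬ IsQSequence xseq := by
  exact content_zero_nonzero_localCohomology_general A
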